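/- Let 1 ≤ a ≤ b with b ≥ 2 and n ≥ 3a+4 (and na even when a = b). If G is an n-vertex graph that is not [a,b]-covered, then ρ(G) ≤ ρ(H_{n,a}), with equality if and only if G ≅ H_{n,a}. -/

import Mathlib

open SimpleGraph Finset
open scoped Classical

lemma adjMatrix_isHermitian {V : Type*} [Fintype V] (G : SimpleGraph V)
    [DecidableRel G.Adj] : (G.adjMatrix ℝ).IsHermitian := by
  ext i j
  simp [Matrix.conjTranspose_apply, SimpleGraph.adjMatrix_apply, SimpleGraph.adj_comm]

/-- The spectral radius of a graph: the largest eigenvalue of its adjacency matrix. -/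
noncomputable def specRad {n : ℕ} (G : SimpleGraph (Fin n)) : ℝ := by
  classical
  exact ⨆ i, (adjMatrix_isHermitian G).eigenvalues i

/-- H_{n,γ}: vertex 0 is joined to the γ-1 vertices 1,…,γ-1; vertices 1,…,n-1 form a
clique.  Thus Hgraph n γ = K_{γ-1} ∨ (K_{n-γ} ∪ K_1). -/
def Hgraph (n γ : ℕ) : SimpleGraph (Fin n) :=
  SimpleGraph.fromRel (fun u v =>
    (0 < u.val ∧ 0 < v.val) ∨ (u.val = 0 ∧ 0 < v.val ∧ v.val < γ))

/-- There is an [a,b]-factor of G (a spanning subgraph F with a ≤ d_F(v) ≤ b for all v)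
containing the edge uv. -/
def HasABFactorThrough {V : Type*} [Fintype V] (G : SimpleGraph V) (a b : ℕ)
    (u v : V) : Prop :=
  ∃ F : SimpleGraph V, F ≤ G ∧ F.Adj u v ∧
    ∀ w : V, a ≤ (F.neighborSet w).ncard ∧ (F.neighborSet w).ncard ≤ b

/-- G is [a,b]-covered: every edge of G lies in some [a,b]-factor. -/
def IsABCovered {V : Type*} [Fintype V] (G : SimpleGraph V) (a b : ℕ) : Prop :=
  ∀ u v : V, G.Adj u v → HasABFactorThrough G a b u v

section Combinatorics

variable {V : Type*} [Fintype V]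

/-- The degree of `v` in `F`. -/
noncomputable def degr (F : SimpleGraph V) (v : V) : ℕ := #{w | F.Adj v w}

/-- The number of vertices other than `v` not adjacent to `v`. -/
noncomputable def codeg (G : SimpleGraph V) (v : V) : ℕ := #{w | w ≠ v ∧ ¬ G.Adj v w}

lemma ncard_neighborSet_eq_degr (F : SimpleGraph V) (v : V) :
    (F.neighborSet v).ncard = degr F v := by
  rw [degr, ← Set.ncard_coe_finset]
  congr 1
  ext w
  simp

lemma degr_add_codeg (G : SimpleGraph V) (v : V) :
    degr G v + codeg G v + 1 = Fintype.card V := by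
  have h := Finset.card_filter_add_card_filter_not (s := (univ : Finset V)) (fun w => G.Adj v w)
  have h2 : ({w | ¬ G.Adj v w} : Finset V) = insert v ({w | w ≠ v ∧ ¬ G.Adj v w} : Finset V) := by
    ext w
    simp only [mem_filter, mem_univ, true_and, mem_insert]
    by_cases hw : w = v
    · subst hw; simp
    · simp [hw]
  rw [h2, card_insert_of_notMem (by simp), card_univ] at h
  unfold degr codeg
  omega

lemma degr_sup_edge {F : SimpleGraph V} {u x : V} (hux : u ≠ x) (h : ¬ F.Adj u x) (v : V) :
    degr (F ⊔ edge u x) v = degr F v + if v = u ∨ v = x then 1 else 0 := by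
  unfold degr
  have hxu : ¬ F.Adj x u := fun h' => h h'.symm
  split_ifs with hv
  · rcases hv with rfl | rfl
    · rw [← card_insert_of_notMem (a := x) (by simpa using h)]
      congr 1
      ext w
      simp only [mem_filter, mem_univ, true_and, mem_insert, sup_adj, edge_adj]
      grind
    · rw [← card_insert_of_notMem (a := u) (by simpa using hxu)]
      congr 1
      ext w
      simp only [mem_filter, mem_univ, true_and, mem_insert, sup_adj, edge_adj]
      grind
  · rw [add_zero]
    congr 1
    ext w
    simp only [mem_filter, mem_univ, true_and, sup_adj, edge_adj]
    grind

lemma degr_deleteEdges {F : SimpleGraph V} {x z : V} (h : F.Adj x z) (v : V) :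
    degr (F.deleteEdges {s(x, z)}) v + (if v = x ∨ v = z then 1 else 0) = degr F v := by
  have hn : ¬ (F.deleteEdges {s(x, z)}).Adj x z := by simp
  rw [← degr_sup_edge h.ne hn]
  congr 1
  ext a b
  simp only [sup_adj, edge_adj, deleteEdges_adj, Set.mem_singleton_iff, Sym2.eq_iff]
  have := h.symm
  grind [SimpleGraph.Adj.ne]

lemma degr_move {F : SimpleGraph V} {u x z : V} (hux : u ≠ x) (h : ¬ F.Adj u x)
    (hxz : F.Adj x z) (v : V) :
    degr (F.deleteEdges {s(x, z)} ⊔ edge u x) v + (if v = z then 1 else 0) =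
      degr F v + if v = u then 1 else 0 := by
  have h1 := degr_deleteEdges hxz v
  have h2 := degr_sup_edge (F := F.deleteEdges {s(x, z)}) hux (by simp [h]) v
  have := hxz.ne
  grind

/-- Double counting of the edges other than `pq` leaving `X`, all of which end in `A`. -/
lemma sum_degr_le {F : SimpleGraph V} {p q : V} {X A : Finset V}
    (hA : ∀ x ∈ X, ∀ z, F.Adj x z → s(x, z) ≠ s(p, q) → z ∈ A) :
    ∑ x ∈ X, degr F x ≤ ∑ z ∈ A, degr F z + 2 := by
  have h1 : ∀ x, degr F x ≤ #{z | F.Adj x z ∧ s(x, z) ≠ s(p, q)} +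
      if x = p ∨ x = q then 1 else 0 := by
    intro x
    by_cases hx : x = p ∨ x = q
    · rw [if_pos hx]
      obtain ⟨y, hy⟩ : ∃ y, ∀ z, s(x, z) = s(p, q) → z = y := by
        rcases hx with rfl | rfl
        · exact ⟨q, fun z hz => by grind⟩
        · exact ⟨p, fun z hz => by grind⟩
      rw [degr]
      refine (card_le_card (t := insert y ({z | F.Adj x z ∧ s(x, z) ≠ s(p, q)} : Finset V))
        ?_).trans (card_insert_le _ _)
      intro z hz
      simp only [mem_filter, mem_univ, true_and, mem_insert] at hz ⊢
      by_cases h : s(x, z) = s(p, q)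
      · exact Or.inl (hy z h)
      · exact Or.inr ⟨hz, h⟩
    · rw [if_neg hx, add_zero, degr]
      refine card_le_card fun z hz => ?_
      simp only [mem_filter, mem_univ, true_and] at hz ⊢
      exact ⟨hz, by grind⟩
  have h2 : ∑ x ∈ X, (if x = p ∨ x = q then 1 else 0) ≤ 2 := by
    rw [sum_boole]
    refine (Nat.cast_le.mpr (card_le_card (t := {p, q}) fun x hx => ?_)).trans card_le_two
    simp only [mem_filter] at hx
    simpa using hx.2
  have h3 := sum_card_bipartiteAbove_eq_sum_card_bipartiteBelow (s := X) (t := A)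
    (fun x z => F.Adj x z ∧ s(x, z) ≠ s(p, q))
  have h4 : ∀ x ∈ X, #{z | F.Adj x z ∧ s(x, z) ≠ s(p, q)} =
      #(bipartiteAbove (fun x z => F.Adj x z ∧ s(x, z) ≠ s(p, q)) A x) := by
    intro x hx
    congr 1
    ext z
    simp only [mem_filter, mem_univ, true_and, bipartiteAbove]
    exact ⟨fun h => ⟨hA x hx z h.1 h.2, h⟩, fun h => h.2⟩
  have h5 : ∀ z ∈ A, #(bipartiteBelow (fun x z => F.Adj x z ∧ s(x, z) ≠ s(p, q)) X z) ≤
      degr F z := by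
    intro z _
    refine card_le_card fun x hx => ?_
    simp only [mem_filter, mem_univ, true_and, bipartiteBelow] at hx ⊢
    exact hx.2.1.symm
  calc ∑ x ∈ X, degr F x
      ≤ ∑ x ∈ X, (#{z | F.Adj x z ∧ s(x, z) ≠ s(p, q)} + if x = p ∨ x = q then 1 else 0) :=
        sum_le_sum fun x _ => h1 x
    _ ≤ ∑ x ∈ X, #{z | F.Adj x z ∧ s(x, z) ≠ s(p, q)} + 2 := by
        rw [sum_add_distrib]; omega
    _ ≤ ∑ z ∈ A, degr F z + 2 := by
        rw [sum_congr rfl h4, h3]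
        exact Nat.add_le_add_right (sum_le_sum h5) 2

lemma two_mul_card_mul_le_sum_codeg {G : SimpleGraph V} {K : Finset V} {μ : ℕ}
    (hK : ∀ v ∈ K, μ ≤ codeg G v) :
    2 * (#K * μ) ≤ ∑ v, codeg G v + #K * (#K - 1) := by
  have h3 := sum_card_bipartiteAbove_eq_sum_card_bipartiteBelow (s := K) (t := Kᶜ)
    (fun x z => z ≠ x ∧ ¬ G.Adj x z)
  have h1 : ∀ v ∈ K, codeg G v ≤
      #(bipartiteAbove (fun x z => z ≠ x ∧ ¬ G.Adj x z) Kᶜ v) + (#K - 1) := by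
    intro v hv
    rw [← card_erase_of_mem hv]
    refine (card_le_card fun z hz => ?_).trans (card_union_le _ _)
    simp only [mem_filter, mem_univ, true_and, bipartiteAbove, mem_union, mem_erase,
      mem_compl] at hz ⊢
    tauto
  have h2 : ∀ v ∈ Kᶜ, #(bipartiteBelow (fun x z => z ≠ x ∧ ¬ G.Adj x z) K v) ≤ codeg G v := by
    intro v _
    refine card_le_card fun z hz => ?_
    simp only [mem_filter, mem_univ, true_and, bipartiteBelow] at hz ⊢
    exact ⟨hz.2.1.symm, fun h => hz.2.2 h.symm⟩
  have h4 := sum_le_sum h1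
  have h5 := sum_le_sum h2
  have h6 := sum_le_sum hK
  have h7 := sum_add_sum_compl K (codeg G)
  rw [sum_add_distrib, sum_const, smul_eq_mul] at h4
  rw [sum_const, smul_eq_mul] at h6
  omega

lemma card_mul_le_sum_codeg {G : SimpleGraph V} {K : Finset V} {μ : ℕ}
    (hK : ∀ v ∈ K, μ ≤ codeg G v) : #K * μ ≤ ∑ v, codeg G v := by
  have h6 := sum_le_sum hK
  have h7 := sum_add_sum_compl K (codeg G)
  rw [sum_const, smul_eq_mul] at h6
  omega

/-- The neighbours of `u` in `G` that are not neighbours in `F`. -/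
noncomputable def freeNbrs (G F : SimpleGraph V) (u : V) : Finset V :=
  {x | G.Adj u x ∧ ¬ F.Adj u x}

lemma card_freeNbrs_add_degr {G F : SimpleGraph V} (h : F ≤ G) (u : V) :
    #(freeNbrs G F u) + degr F u = degr G u := by
  rw [freeNbrs, degr, degr, ← card_union_of_disjoint]
  · congr 1
    ext x
    simp only [mem_filter, mem_univ, true_and, mem_union]
    have := @h u x
    tauto
  · rw [Finset.disjoint_left]
    simp +contextual

lemma adj_deleteEdges_sup {W : Type*} {F E : SimpleGraph W} {p q x z : W} (h : F.Adj p q)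
    (hxz : s(x, z) ≠ s(p, q)) : (F.deleteEdges {s(x, z)} ⊔ E).Adj p q := by
  simp only [sup_adj, deleteEdges_adj, Set.mem_singleton_iff]
  exact Or.inl ⟨h, hxz.symm⟩

lemma deleteEdges_sup_edge_le {W : Type*} {F G : SimpleGraph W} {S : Set (Sym2 W)} {u x : W}
    (h : F ≤ G)
    (hux : G.Adj u x) : F.deleteEdges S ⊔ edge u x ≤ G :=
  sup_le ((F.deleteEdges_le S).trans h) ((edge_le_iff _).mpr (Or.inr hux))

/-- The vertices reachable from `u` by an edge of `G` outside `F` followed by an edge of `F`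
other than `pq`. -/
noncomputable def alternatingNbrs (G F : SimpleGraph V) (p q u : V) : Finset V :=
  {z | ∃ x ∈ freeNbrs G F u, F.Adj x z ∧ s(x, z) ≠ s(p, q)}

lemma notMem_alternatingNbrs_self {G F : SimpleGraph V} {p q u : V} :
    u ∉ alternatingNbrs G F p q u := by
  simp only [alternatingNbrs, freeNbrs, mem_filter, mem_univ, true_and, not_exists, not_and]
  exact fun x hx h => absurd h.symm hx.2

lemma alternatingNbrs_nonempty {G F : SimpleGraph V} {p q u x : V}
    (hx : x ∈ freeNbrs G F u) (h : 2 ≤ degr F x) : (alternatingNbrs G F p q u).Nonempty := by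
  obtain ⟨z, hz, z', hz', hne⟩ := one_lt_card.mp h
  simp only [mem_filter, mem_univ, true_and] at hz hz'
  by_contra h0
  have hmem : ∀ y, F.Adj x y → s(x, y) = s(p, q) := by
    intro y hy
    by_contra he
    refine h0 ⟨y, ?_⟩
    simp only [alternatingNbrs, mem_filter, mem_univ, true_and]
    exact ⟨x, hx, hy, he⟩
  have := (hmem z hz).trans (hmem z' hz').symm
  grind

lemma sum_degr_freeNbrs_le (G F : SimpleGraph V) (p q u : V) :
    ∑ x ∈ freeNbrs G F u, degr F x ≤ ∑ z ∈ alternatingNbrs G F p q u, degr F z + 2 :=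
  sum_degr_le fun x hx z h1 h2 => by
    simp only [alternatingNbrs, mem_filter, mem_univ, true_and]
    exact ⟨x, hx, h1, h2⟩

/-- Sum of the degrees in `F`, weighted by the number of missing edges of `G` plus one. -/
noncomputable def weight (G F : SimpleGraph V) : ℕ := ∑ v, degr F v * (1 + codeg G v)

lemma weight_lt_weight {G F F' : SimpleGraph V} (u : V) (h : ∀ v, degr F v ≤ degr F' v)
    (hu : degr F u < degr F' u) : weight G F < weight G F' :=
  sum_lt_sum (fun v _ => Nat.mul_le_mul_right _ (h v))
    ⟨u, mem_univ u, Nat.mul_lt_mul_of_pos_right hu (by omega)⟩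

/-- `F` is a subgraph of `G` through the edge `pq` with degrees at most `a`, of largest weight. -/
structure IsOptimal (G F : SimpleGraph V) (p q : V) (a : ℕ) : Prop where
  le : F ≤ G
  adj : F.Adj p q
  degr_le : ∀ v, degr F v ≤ a
  weight_le : ∀ F' ≤ G, F'.Adj p q → (∀ v, degr F' v ≤ a) → weight G F' ≤ weight G F

lemma exists_isOptimal {G : SimpleGraph V} {p q : V} {a : ℕ} (ha : 1 ≤ a) (h : G.Adj p q) :
    ∃ F, IsOptimal G F p q a := by
  let S : Finset (SimpleGraph V) := {F | F ≤ G ∧ F.Adj p q ∧ ∀ v, degr F v ≤ a}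
  have hS : S.Nonempty := by
    refine ⟨⊥ ⊔ edge p q, ?_⟩
    simp only [S, mem_filter, mem_univ, true_and]
    refine ⟨sup_le bot_le ((edge_le_iff _).mpr (Or.inr h)), ?_, fun v => ?_⟩
    · simp [edge_adj, h.ne]
    · rw [degr_sup_edge h.ne (by simp)]
      have : degr (⊥ : SimpleGraph V) v = 0 := by simp [degr]
      split_ifs <;> omega
  obtain ⟨F, hF, hmax⟩ := exists_max_image S (weight G) hS
  simp only [S, mem_filter, mem_univ, true_and] at hF hmax
  exact ⟨F, hF.1, hF.2.1, hF.2.2, fun F' h1 h2 h3 => hmax F' ⟨h1, h2, h3⟩⟩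

namespace IsOptimal

variable {G F : SimpleGraph V} {p q u w : V} {a : ℕ}

lemma degr_eq_of_mem_freeNbrs (hF : IsOptimal G F p q a) (hu : degr F u < a) {x : V}
    (hx : x ∈ freeNbrs G F u) : degr F x = a := by
  simp only [freeNbrs, mem_filter, mem_univ, true_and] at hx
  by_contra hxa
  have hxa' := lt_of_le_of_ne (hF.degr_le x) hxa
  have hd := degr_sup_edge (F := F) hx.1.ne hx.2
  refine (weight_lt_weight (G := G) (F' := F ⊔ edge u x) u (fun v => ?_) ?_).not_ge
    (hF.weight_le _ (sup_le hF.le ((edge_le_iff _).mpr (Or.inr hx.1))) (Or.inl hF.adj) fun v => ?_)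
  · rw [hd]; omega
  · rw [hd]; simp
  · have := hF.degr_le v
    rw [hd]
    split_ifs with hv
    · rcases hv with rfl | rfl <;> omega
    · omega

lemma codeg_le_codeg (hF : IsOptimal G F p q a) (hu : degr F u < a) {x z : V}
    (hx : x ∈ freeNbrs G F u) (hxz : F.Adj x z) (he : s(x, z) ≠ s(p, q)) :
    codeg G u ≤ codeg G z := by
  simp only [freeNbrs, mem_filter, mem_univ, true_and] at hx
  have hd := degr_move hx.1.ne hx.2 hxz
  have hw := hF.weight_le _ (deleteEdges_sup_edge_le hF.le hx.1 (S := {s(x, z)}))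
    (adj_deleteEdges_sup hF.adj he) fun v => by
      have := hd v
      have := hF.degr_le v
      by_cases hv : v = u
      · subst hv; rw [if_pos rfl] at *; omega
      · simp only [hv, if_false] at *; omega
  have hs := sum_congr rfl fun v (_ : v ∈ univ) => congrArg (· * (1 + codeg G v)) (hd v)
  simp only [add_mul, sum_add_distrib, ite_mul, one_mul, zero_mul, sum_ite_eq', mem_univ,
    if_true] at hs
  simp only [weight, mul_add, mul_one, sum_add_distrib] at hs hw
  omega

lemma eq_of_adj (hF : IsOptimal G F p q a) (hu : degr F u < a) (hw : degr F w < a)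
    (huw : u = w → degr F u + 2 ≤ a) {x y : V} (hx : x ∈ freeNbrs G F u)
    (hy : y ∈ freeNbrs G F w) (hxy : F.Adj x y) : s(x, y) = s(p, q) := by
  by_contra he
  have hxa := hF.degr_eq_of_mem_freeNbrs hu hx
  have hya := hF.degr_eq_of_mem_freeNbrs hw hy
  simp only [freeNbrs, mem_filter, mem_univ, true_and] at hx hy
  have hxw : x ≠ w := by rintro rfl; omega
  have hd1 := degr_move hx.1.ne hx.2 hxy
  have hadj : ¬ (F.deleteEdges {s(x, y)} ⊔ edge u x).Adj w y := by
    simp only [sup_adj, deleteEdges_adj, edge_adj]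
    have := hxy.ne
    grind
  have hd2 := degr_sup_edge hy.1.ne hadj
  have hyu : y ≠ u := by rintro rfl; omega
  have hd : ∀ v, degr (F.deleteEdges {s(x, y)} ⊔ edge u x ⊔ edge w y) v =
      degr F v + (if v = u then 1 else 0) + if v = w then 1 else 0 := by
    intro v
    have := hd1 v
    have := hd2 v
    have := hy.1.ne
    grind
  refine (weight_lt_weight (G := G) u (fun v => ?_) ?_).not_ge
    (hF.weight_le (F.deleteEdges {s(x, y)} ⊔ edge u x ⊔ edge w y)
      (sup_le (deleteEdges_sup_edge_le hF.le hx.1) ((edge_le_iff _).mpr (Or.inr hy.1)))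
      (Or.inl (adj_deleteEdges_sup hF.adj he)) fun v => ?_)
  · rw [hd]; omega
  · rw [hd, if_pos rfl]; omega
  · have := hF.degr_le v
    rw [hd]
    grind

lemma mul_card_freeNbrs_le (hF : IsOptimal G F p q a) (hu : degr F u < a) :
    a * #(freeNbrs G F u) ≤ ∑ z ∈ alternatingNbrs G F p q u, degr F z + 2 := by
  have h := sum_degr_freeNbrs_le G F p q u
  rwa [sum_congr rfl fun x hx => hF.degr_eq_of_mem_freeNbrs hu hx, sum_const, smul_eq_mul,
    mul_comm] at h

lemma card_freeNbrs_le (hF : IsOptimal G F p q a) (ha : 2 ≤ a) (hu : degr F u < a) :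
    #(freeNbrs G F u) ≤ #(alternatingNbrs G F p q u) + 1 := by
  have h := hF.mul_card_freeNbrs_le hu
  have h2 := sum_le_card_nsmul (alternatingNbrs G F p q u) (degr F) a fun z _ => hF.degr_le z
  rw [smul_eq_mul] at h2
  by_contra! hlt
  nlinarith

lemma card_freeNbrs_le_of_mem (hF : IsOptimal G F p q a) (ha : 2 ≤ a) (hu : degr F u < a)
    (hw : degr F w < a) (hwA : w ∈ alternatingNbrs G F p q u) :
    #(freeNbrs G F u) ≤ #(alternatingNbrs G F p q u) := by
  have h := hF.mul_card_freeNbrs_le hu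
  have h2 := sum_lt_sum (s := alternatingNbrs G F p q u) (f := degr F) (g := fun _ => a)
    (fun z _ => hF.degr_le z) ⟨w, hwA, hw⟩
  rw [sum_const, smul_eq_mul] at h2
  by_contra! hlt
  nlinarith

lemma codeg_le_three (hF : IsOptimal G F p q a) (ha : 2 ≤ a) (hn : 3 * a + 4 ≤ Fintype.card V)
    (hδ : ∀ v, a ≤ degr G v) (hS : ∑ v, codeg G v + 3 ≤ 2 * Fintype.card V)
    (hu : degr F u < a) : codeg G u ≤ 3 := by
  have hK : ∀ v ∈ insert u (alternatingNbrs G F p q u), codeg G u ≤ codeg G v := by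
    intro v hv
    rcases mem_insert.mp hv with rfl | hv
    · exact le_rfl
    · simp only [alternatingNbrs, mem_filter, mem_univ, true_and] at hv
      obtain ⟨x, hx, h1, h2⟩ := hv
      exact hF.codeg_le_codeg hu hx h1 h2
  have hsub : ∀ k ≤ #(alternatingNbrs G F p q u) + 1,
      2 * (k * codeg G u) ≤ ∑ v, codeg G v + k * (k - 1) := by
    intro k hk
    rw [← card_insert_of_notMem (notMem_alternatingNbrs_self)] at hk
    obtain ⟨K, hKs, rfl⟩ := exists_subset_card_eq hk
    exact two_mul_card_mul_le_sum_codeg fun v hv => hK v (hKs hv)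
  have hX1 := card_freeNbrs_add_degr hF.le u
  have hX2 := degr_add_codeg G u
  have hX3 := hδ u
  have hXA := hF.card_freeNbrs_le ha hu
  have hA1 : 1 ≤ #(alternatingNbrs G F p q u) := by
    obtain ⟨x, hx⟩ : (freeNbrs G F u).Nonempty := card_pos.mp (by omega)
    have hxa := hF.degr_eq_of_mem_freeNbrs hu hx
    exact card_pos.mpr (alternatingNbrs_nonempty hx (by omega))
  have h2 := hsub 2 (by omega)
  have h4 := hsub 4 (by omega)
  have hk := card_mul_le_sum_codeg hK
  rw [card_insert_of_notMem (notMem_alternatingNbrs_self)] at hk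
  by_contra! hlt
  generalize codeg G u = m at *
  have hs : Fintype.card V ≤ (#(alternatingNbrs G F p q u) + 1) + a + m := by omega
  generalize #(alternatingNbrs G F p q u) + 1 = k at *
  generalize Fintype.card V = n at *
  have hk' : k * m + 3 ≤ 2 * n := by omega
  have h4' : 4 * m ≤ n + 4 := by omega
  have hs' : 2 * n + 4 ≤ 3 * k + 3 * m := by omega
  zify at *
  nlinarith

/-- At most one vertex falls short of degree `a`, and only by one. -/
lemma eq_and_degr_add_one_eq (hF : IsOptimal G F p q a) (ha : 2 ≤ a)
    (hn : 3 * a + 4 ≤ Fintype.card V)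
    (hδ : ∀ v, a ≤ degr G v) (hS : ∑ v, codeg G v + 3 ≤ 2 * Fintype.card V)
    (hu : degr F u < a) (hw : degr F w < a) : u = w ∧ degr F u + 1 = a := by
  by_contra hne
  have huw : u = w → degr F u + 2 ≤ a := fun h => by
    have : degr F u + 1 ≠ a := fun h' => hne ⟨h, h'⟩
    omega
  have hdisj : Disjoint (alternatingNbrs G F p q u) (freeNbrs G F w) := by
    rw [Finset.disjoint_left]
    intro z hz hzX
    simp only [alternatingNbrs, mem_filter, mem_univ, true_and] at hz
    obtain ⟨x, hx, h1, h2⟩ := hz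
    exact h2 (hF.eq_of_adj hu hw huw hx hzX h1)
  have hnX : ∀ v, degr F v < a → v ∉ (freeNbrs G F w) := fun v hv hvX => by
    have := hF.degr_eq_of_mem_freeNbrs hw hvX
    omega
  have hcard : #(insert w (insert u (alternatingNbrs G F p q u))) + #(freeNbrs G F w) ≤
      Fintype.card V := by
    rw [← card_union_of_disjoint]
    · exact card_le_univ _
    · simp [hdisj, hnX u hu, hnX w hw]
  have hmu := hF.codeg_le_three ha hn hδ hS hu
  have hmw := hF.codeg_le_three ha hn hδ hS hw
  have hXu := card_freeNbrs_add_degr hF.le u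
  have hXw := card_freeNbrs_add_degr hF.le w
  have hGu := degr_add_codeg G u
  have hGw := degr_add_codeg G w
  have h1 := hF.card_freeNbrs_le ha hu
  have huA : #(insert u (alternatingNbrs G F p q u)) = #(alternatingNbrs G F p q u) + 1 :=
    card_insert_of_notMem notMem_alternatingNbrs_self
  by_cases hwu : w = u
  · subst hwu
    rw [insert_eq_of_mem (mem_insert_self _ _), huA] at hcard
    have := huw rfl
    omega
  · by_cases hwA : w ∈ (alternatingNbrs G F p q u)
    · have := hF.card_freeNbrs_le_of_mem ha hu hw hwA
      rw [insert_eq_of_mem (mem_insert_of_mem hwA), huA] at hcard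
      omega
    · rw [card_insert_of_notMem (by simp [hwA, hwu]), huA] at hcard
      omega

end IsOptimal

lemma even_sum_degr (F : SimpleGraph V) : Even (∑ v, degr F v) := by
  have h := F.sum_degrees_eq_twice_card_edges
  have h2 : ∀ v, degr F v = F.degree v := fun v => by
    rw [← ncard_neighborSet_eq_degr, Set.ncard_eq_toFinset_card', Set.toFinset_card,
      card_neighborSet_eq_degree]
  rw [sum_congr rfl fun v _ => h2 v, h]
  exact even_two_mul _

lemma hasABFactorThrough_of_two_le {G : SimpleGraph V} {a b : ℕ} {p q : V} (ha : 2 ≤ a)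
    (hab : a ≤ b) (hn : 3 * a + 4 ≤ Fintype.card V) (hpar : a = b → Even (Fintype.card V * a))
    (hδ : ∀ v, a ≤ degr G v) (hS : ∑ v, codeg G v + 3 ≤ 2 * Fintype.card V) (h : G.Adj p q) :
    HasABFactorThrough G a b p q := by
  obtain ⟨F, hF⟩ := exists_isOptimal (a := a) (by omega) h
  by_cases hall : ∀ v, a ≤ degr F v
  · refine ⟨F, hF.le, hF.adj, fun v => ?_⟩
    rw [ncard_neighborSet_eq_degr]
    exact ⟨hall v, (hF.degr_le v).trans hab⟩
  push Not at hall
  obtain ⟨u, hu⟩ := hall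
  have huniq : ∀ v, degr F v < a → u = v := fun v hv =>
    (hF.eq_and_degr_add_one_eq ha hn hδ hS hu hv).1
  have hua := (hF.eq_and_degr_add_one_eq ha hn hδ hS hu hu).2
  have hd : ∀ v, degr F v + (if v = u then 1 else 0) = a := by
    intro v
    have := hF.degr_le v
    by_cases hv : v = u
    · subst hv; simpa using hua
    · have : ¬ degr F v < a := fun h => hv (huniq v h).symm
      simp only [hv, if_false]
      omega
  have hlt : a < b := by
    refine lt_of_le_of_ne hab fun heq => ?_
    have h1 := hpar heq
    have h2 := even_sum_degr F
    have h3 := sum_congr rfl fun v (_ : v ∈ univ) => hd v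
    rw [sum_add_distrib, sum_ite_eq', if_pos (mem_univ u), sum_const, card_univ,
      smul_eq_mul] at h3
    rw [← h3] at h1
    exact Nat.not_even_iff_odd.mpr h2.add_one h1
  obtain ⟨x, hx⟩ : (freeNbrs G F u).Nonempty := card_pos.mp (by
    have := card_freeNbrs_add_degr hF.le u
    have := hδ u
    omega)
  simp only [freeNbrs, mem_filter, mem_univ, true_and] at hx
  refine ⟨F ⊔ edge u x, sup_le hF.le ((edge_le_iff _).mpr (Or.inr hx.1)), Or.inl hF.adj,
    fun v => ?_⟩
  rw [ncard_neighborSet_eq_degr, degr_sup_edge hx.1.ne hx.2]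
  have := hd v
  grind

/-- The number of vertices covered by `F`, weighted by the number of missing edges of `G` plus
one. -/
noncomputable def coverWeight (G F : SimpleGraph V) : ℕ := ∑ v with degr F v ≠ 0, (1 + codeg G v)

lemma hasABFactorThrough_one {G : SimpleGraph V} {b : ℕ} {p q : V} (hb : 2 ≤ b)
    (hn : 7 ≤ Fintype.card V) (hδ : ∀ v, 1 ≤ degr G v)
    (hS : ∑ v, codeg G v + 3 ≤ 2 * Fintype.card V) (h : G.Adj p q) :
    HasABFactorThrough G 1 b p q := by
  obtain ⟨F, ⟨hle, hpq, hd2⟩, hmax⟩ : ∃ F : SimpleGraph V,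
      (F ≤ G ∧ F.Adj p q ∧ ∀ v, degr F v ≤ 2) ∧ ∀ F' : SimpleGraph V, F' ≤ G → F'.Adj p q →
        (∀ v, degr F' v ≤ 2) → coverWeight G F' ≤ coverWeight G F := by
    obtain ⟨F₀, hF₀⟩ := exists_isOptimal (a := 2) (by omega) h
    obtain ⟨F, hF, hmax⟩ := exists_max_image
      ({F | F ≤ G ∧ F.Adj p q ∧ ∀ v, degr F v ≤ 2} : Finset (SimpleGraph V)) (coverWeight G)
      ⟨F₀, by simpa using ⟨hF₀.le, hF₀.adj, hF₀.degr_le⟩⟩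
    simp only [mem_filter, mem_univ, true_and] at hF hmax
    exact ⟨F, hF, fun F' h1 h2 h3 => hmax F' ⟨h1, h2, h3⟩⟩
  have hcov : ∀ (F' : SimpleGraph V) (u : V), degr F u = 0 → degr F' u ≠ 0 →
      (∀ v, degr F v ≠ 0 → degr F' v ≠ 0) → coverWeight G F < coverWeight G F' := by
    intro F' u h0 h1 hall
    refine sum_lt_sum_of_subset (i := u) (fun v hv => ?_) (by simpa using h1) (by simpa using h0)
      (by omega) (by simp)
    simp only [mem_filter, mem_univ, true_and] at hv ⊢
    exact hall v hv
  by_cases hall : ∀ v, 1 ≤ degr F v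
  · refine ⟨F, hle, hpq, fun v => ?_⟩
    rw [ncard_neighborSet_eq_degr]
    exact ⟨hall v, (hd2 v).trans hb⟩
  exfalso
  push Not at hall
  obtain ⟨u, hu⟩ := hall
  replace hu : degr F u = 0 := by omega
  have hX2 : ∀ x ∈ freeNbrs G F u, degr F x = 2 := by
    intro x hx
    simp only [freeNbrs, mem_filter, mem_univ, true_and] at hx
    by_contra hx2
    have hd := degr_sup_edge (F := F) hx.1.ne hx.2
    refine (hcov (F ⊔ edge u x) u hu (by rw [hd]; simp) fun v hv => ?_).not_ge
      (hmax _ (sup_le hle ((edge_le_iff _).mpr (Or.inr hx.1))) (Or.inl hpq) fun v => ?_)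
    · rw [hd]; omega
    · have := hd2 v
      have := hd2 x
      rw [hd]
      grind
  have hA : ∀ z ∈ alternatingNbrs G F p q u, degr F z = 1 ∧ codeg G u ≤ codeg G z := by
    intro z hz
    simp only [alternatingNbrs, mem_filter, mem_univ, true_and] at hz
    obtain ⟨x, hx, hxz, he⟩ := hz
    simp only [freeNbrs, mem_filter, mem_univ, true_and] at hx
    have hd := degr_move hx.1.ne hx.2 hxz
    have hzu : z ≠ u := by
      rintro rfl
      exact hx.2 hxz.symm
    have hw := hmax _ (deleteEdges_sup_edge_le hle hx.1 (S := {s(x, z)}))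
      (adj_deleteEdges_sup hpq he) fun v => by
        have := hd v
        have := hd2 v
        grind
    have hz1 : degr F z = 1 := by
      by_contra hz1
      refine (hcov _ u hu ?_ fun v hv => ?_).not_ge hw
      · have := hd u
        grind
      · have := hd v
        have := hd z
        grind
    refine ⟨hz1, ?_⟩
    have hsub : insert u (({v | degr F v ≠ 0} : Finset V).erase z) ⊆
        ({v | degr (F.deleteEdges {s(x, z)} ⊔ edge u x) v ≠ 0} : Finset V) := by
      intro v hv
      have := hd v
      simp only [mem_insert, mem_erase, mem_filter, mem_univ, true_and] at hv ⊢
      grind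
    have h1 := sum_le_sum_of_subset (f := fun v => 1 + codeg G v) hsub
    rw [sum_insert (by simp [hu])] at h1
    have h2 := add_sum_erase ({v | degr F v ≠ 0} : Finset V) (fun v => 1 + codeg G v)
      (a := z) (by simp [hz1])
    simp only [coverWeight] at hw
    omega
  have hXcard := card_freeNbrs_add_degr hle u
  have hGu := degr_add_codeg G u
  have hδu := hδ u
  obtain ⟨x, hx⟩ : (freeNbrs G F u).Nonempty := card_pos.mp (by omega)
  obtain ⟨z, hz⟩ := alternatingNbrs_nonempty (p := p) (q := q) hx (hX2 x hx).ge
  have hzu : u ≠ z := by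
    rintro rfl
    exact notMem_alternatingNbrs_self hz
  have hpair := two_mul_card_mul_le_sum_codeg (G := G) (K := {u, z}) (μ := codeg G u)
    (by simpa using (hA z hz).2)
  rw [card_pair hzu] at hpair
  have hcount := sum_degr_freeNbrs_le G F p q u
  rw [sum_congr rfl hX2, sum_congr rfl fun z hz => (hA z hz).1, sum_const, sum_const,
    smul_eq_mul, smul_eq_mul] at hcount
  have hdisj : Disjoint (insert u (alternatingNbrs G F p q u)) (freeNbrs G F u) := by
    rw [Finset.disjoint_left]
    intro v hv hvX
    have h2 := hX2 v hvX
    rcases mem_insert.mp hv with rfl | hv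
    · omega
    · have := (hA v hv).1
      omega
  have hcard := card_le_univ (insert u (alternatingNbrs G F p q u) ∪ freeNbrs G F u)
  rw [card_union_of_disjoint hdisj, card_insert_of_notMem notMem_alternatingNbrs_self] at hcard
  omega

lemma isABCovered_of_sum_codeg {G : SimpleGraph V} {a b : ℕ} (ha : 1 ≤ a) (hab : a ≤ b)
    (hb : 2 ≤ b) (hn : 3 * a + 4 ≤ Fintype.card V) (hpar : a = b → Even (Fintype.card V * a))
    (hδ : ∀ v, a ≤ degr G v) (hS : ∑ v, codeg G v + 3 ≤ 2 * Fintype.card V) :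
    IsABCovered G a b := by
  intro p q h
  obtain rfl | ha2 := ha.eq_or_lt
  · exact hasABFactorThrough_one hb hn hδ hS h
  · exact hasABFactorThrough_of_two_le ha2 hab hn hpar hδ hS h

end Combinatorics

section Spectral

variable {n : ℕ}

/-- The sum of `x` over the neighbours of `i`. -/
noncomputable def nbrSum (G : SimpleGraph (Fin n)) (x : Fin n → ℝ) (i : Fin n) : ℝ :=
  ∑ j, if G.Adj i j then x j else 0

lemma adjMatrix_mulVec_eq_nbrSum (G : SimpleGraph (Fin n)) [DecidableRel G.Adj]
    (x : Fin n → ℝ) : (G.adjMatrix ℝ).mulVec x = nbrSum G x := by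
  ext i
  simp only [nbrSum, Matrix.mulVec, dotProduct, adjMatrix_apply, ite_mul, one_mul, zero_mul]
  exact sum_congr rfl fun j _ => by by_cases h : G.Adj i j <;> simp [h]

lemma exists_nbrSum_eq_specRad_mul (hn : 0 < n) (G : SimpleGraph (Fin n)) :
    ∃ x : Fin n → ℝ, x ≠ 0 ∧ ∀ i, nbrSum G x i = specRad G * x i := by
  have : Nonempty (Fin n) := ⟨⟨0, hn⟩⟩
  obtain ⟨k, hk⟩ := exists_eq_ciSup_of_finite (f := (adjMatrix_isHermitian G).eigenvalues)
  have hs : specRad G = (adjMatrix_isHermitian G).eigenvalues k := hk.symm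
  refine ⟨(adjMatrix_isHermitian G).eigenvectorBasis k, ?_, fun i => ?_⟩
  · intro h0
    have := (adjMatrix_isHermitian G).eigenvectorBasis.orthonormal.ne_zero k
    exact this (by ext i; exact congrFun h0 i)
  · have := (adjMatrix_isHermitian G).mulVec_eigenvectorBasis k
    rw [adjMatrix_mulVec_eq_nbrSum] at this
    rw [this, hs]
    simp

lemma posSemidef_specRad_sub_adjMatrix (G : SimpleGraph (Fin n)) :
    (algebraMap ℝ (Matrix (Fin n) (Fin n) ℝ) (specRad G) - G.adjMatrix ℝ).PosSemidef := by
  have hA := adjMatrix_isHermitian G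
  rw [Matrix.posSemidef_iff_isHermitian_and_spectrum_nonneg]
  refine ⟨Matrix.IsHermitian.sub ?_ hA, ?_⟩
  · rw [Matrix.algebraMap_eq_diagonal]
    exact Matrix.isHermitian_diagonal _
  · rw [← spectrum.singleton_sub_eq, hA.spectrum_real_eq_range_eigenvalues]
    rintro _ ⟨_, rfl, _, ⟨i, rfl⟩, rfl⟩
    exact sub_nonneg.2 (le_ciSup (f := hA.eigenvalues) (Set.finite_range _).bddAbove i)

lemma specRad_sub_adjMatrix_mulVec (G : SimpleGraph (Fin n)) (x : Fin n → ℝ) :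
    (algebraMap ℝ (Matrix (Fin n) (Fin n) ℝ) (specRad G) - G.adjMatrix ℝ).mulVec x =
      fun i => specRad G * x i - nbrSum G x i := by
  rw [Matrix.sub_mulVec, adjMatrix_mulVec_eq_nbrSum, Matrix.algebraMap_eq_diagonal]
  ext i
  simp [Matrix.mulVec_diagonal]

lemma sum_mul_nbrSum_le (G : SimpleGraph (Fin n)) (x : Fin n → ℝ) :
    ∑ i, x i * nbrSum G x i ≤ specRad G * ∑ i, x i ^ 2 := by
  have h := (posSemidef_specRad_sub_adjMatrix G).dotProduct_mulVec_nonneg x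
  rw [specRad_sub_adjMatrix_mulVec] at h
  simp only [dotProduct, Pi.star_apply, star_trivial, mul_sub, sum_sub_distrib] at h
  rw [mul_sum]
  calc _ ≤ _ := sub_nonneg.1 h
    _ = _ := sum_congr rfl fun i _ => by ring

lemma nbrSum_eq_of_le_sum_mul_nbrSum (G : SimpleGraph (Fin n)) (x : Fin n → ℝ)
    (h : specRad G * ∑ i, x i ^ 2 ≤ ∑ i, x i * nbrSum G x i) (i : Fin n) :
    nbrSum G x i = specRad G * x i := by
  have h1 := (posSemidef_specRad_sub_adjMatrix G).dotProduct_mulVec_zero_iff x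
  rw [specRad_sub_adjMatrix_mulVec] at h1
  have h2 := congrFun (h1.1 ?_) i
  · simp only [Pi.zero_apply] at h2
    linarith
  · simp only [dotProduct, Pi.star_apply, star_trivial, mul_sub, sum_sub_distrib]
    rw [(sum_mul_nbrSum_le G x).antisymm h, mul_sum, sub_eq_zero]
    exact sum_congr rfl fun i _ => by ring

lemma sum_sq_pos {x : Fin n → ℝ} (hx : x ≠ 0) : 0 < ∑ i, x i ^ 2 := by
  obtain ⟨i, hi⟩ := Function.ne_iff.1 hx
  exact sum_pos' (fun _ _ => sq_nonneg _) ⟨i, mem_univ _, by simpa [sq_pos_iff] using hi⟩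

lemma specRad_le_of_iso {G H : SimpleGraph (Fin n)} (hn : 0 < n) (e : G ≃g H) :
    specRad G ≤ specRad H := by
  obtain ⟨x, hx, he⟩ := exists_nbrSum_eq_specRad_mul hn G
  have h := sum_mul_nbrSum_le H (x ∘ e.symm)
  have h1 : ∀ i, nbrSum H (x ∘ e.symm) i = specRad G * x (e.symm i) := by
    intro i
    rw [← he, nbrSum, nbrSum, ← Equiv.sum_comp e.symm.toEquiv
      (fun j => if G.Adj _ j then x j else 0)]
    refine sum_congr rfl fun j _ => ?_
    exact if_congr e.symm.map_adj_iff.symm rfl rfl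
  simp only [h1, Function.comp_apply] at h
  rw [← Equiv.sum_comp e.toEquiv, ← Equiv.sum_comp e.toEquiv (fun i => x (e.symm i) ^ 2)] at h
  have h2 : ∀ i, e.symm (e.toEquiv i) = i := e.symm_apply_apply
  simp only [h2] at h
  refine le_of_mul_le_mul_right ?_ (sum_sq_pos hx)
  rw [mul_sum]
  calc _ = _ := sum_congr rfl fun i _ => by ring
    _ ≤ _ := h

lemma specRad_eq_of_iso {G H : SimpleGraph (Fin n)} (hn : 0 < n) (e : G ≃g H) :
    specRad G = specRad H :=
  (specRad_le_of_iso hn e).antisymm (specRad_le_of_iso hn e.symm)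

lemma Hgraph_adj {a : ℕ} {i j : Fin n} : (Hgraph n a).Adj i j ↔
    i ≠ j ∧ (0 < i.val ∧ 0 < j.val ∨ i.val = 0 ∧ 0 < j.val ∧ j.val < a ∨
      j.val = 0 ∧ 0 < i.val ∧ i.val < a) := by
  rw [Hgraph, fromRel_adj]
  grind

lemma le_specRad_Hgraph (hn : 2 ≤ n) (a : ℕ) : (n : ℝ) - 2 ≤ specRad (Hgraph n a) := by
  obtain ⟨m, rfl⟩ := Nat.exists_eq_add_of_le' (Nat.one_le_of_lt hn)
  have h := sum_mul_nbrSum_le (Hgraph (m + 1) a) (fun i => if i = 0 then 0 else 1)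
  have h1 : ∀ i : Fin m, nbrSum (Hgraph (m + 1) a) (fun i => if i = 0 then 0 else 1) i.succ
      = m - 1 := by
    intro i
    rw [nbrSum, Fin.sum_univ_succ]
    have : ∀ j : Fin m, (if (Hgraph (m + 1) a).Adj i.succ j.succ then
        (if j.succ = 0 then 0 else 1 : ℝ) else 0) = 1 - if j = i then 1 else 0 := by
      intro j
      by_cases hij : j = i
      · simp [hij]
      · simp [Hgraph_adj, hij, Ne.symm hij]
    rw [sum_congr rfl fun j _ => this j]
    simp
  rw [Fin.sum_univ_succ, Fin.sum_univ_succ] at h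
  simp only [h1] at h
  simp at h
  have hm : (0 : ℝ) < m := by exact_mod_cast (by omega : 0 < m)
  push_cast
  nlinarith

lemma specRad_sq_le (hn : 0 < n) {G : SimpleGraph (Fin n)} (hδ : ∀ v, 1 ≤ degr G v) :
    specRad G ^ 2 ≤ ∑ v, (degr G v : ℝ) - (n - 1) := by
  obtain ⟨x, hx, he⟩ := exists_nbrSum_eq_specRad_mul hn G
  have hdeg : ∀ i, (degr G i : ℝ) = ∑ j, if G.Adj i j then 1 else 0 := by
    intro i
    simp [degr]
  have hcs : ∀ i, (specRad G * x i) ^ 2 ≤ ∑ j, if G.Adj i j then degr G i * x j ^ 2 else 0 := by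
    intro i
    have := sq_sum_le_card_mul_sum_sq (s := ({j | G.Adj i j} : Finset (Fin n))) (f := x)
    rw [← he, nbrSum, ← sum_filter, ← sum_filter, ← mul_sum]
    exact this
  have hsum : ∀ j, (∑ i, if G.Adj i j then (degr G i : ℝ) else 0) ≤
      ∑ v, (degr G v : ℝ) - (n - 1) := by
    intro j
    have : ∀ i, (if G.Adj i j then (degr G i : ℝ) else 0) ≤
        degr G i - 1 + (if G.Adj j i then 1 else 0) - if i = j then (degr G i - 1 : ℝ) else 0 := by
      intro i
      have h1 : (1 : ℝ) ≤ degr G i := by exact_mod_cast hδ i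
      by_cases hij : i = j
      · simp [hij]
      · by_cases hA : G.Adj i j
        · simp [hA, hA.symm, hij]
        · have : ¬ G.Adj j i := fun h => hA h.symm
          simp [hA, this, hij]
          simpa using hδ i
    refine (sum_le_sum fun i _ => this i).trans ?_
    rw [sum_sub_distrib, sum_add_distrib, sum_sub_distrib, ← hdeg]
    simp
    linarith
  refine le_of_mul_le_mul_right ?_ (sum_sq_pos hx)
  calc specRad G ^ 2 * ∑ i, x i ^ 2 = ∑ i, (specRad G * x i) ^ 2 := by
        rw [mul_sum]; exact sum_congr rfl fun i _ => by ring
    _ ≤ ∑ i, ∑ j, if G.Adj i j then degr G i * x j ^ 2 else 0 := sum_le_sum fun i _ => hcs i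
    _ = ∑ j, (∑ i, if G.Adj i j then (degr G i : ℝ) else 0) * x j ^ 2 := by
        rw [sum_comm]
        simp only [sum_mul, ite_mul, zero_mul]
    _ ≤ ∑ j, (∑ v, (degr G v : ℝ) - (n - 1)) * x j ^ 2 :=
        sum_le_sum fun j _ => mul_le_mul_of_nonneg_right (hsum j) (sq_nonneg _)
    _ = _ := by rw [mul_sum]

lemma sum_codeg_add_three_le (hn : 2 ≤ n) {G : SimpleGraph (Fin n)} (hδ : ∀ v, 1 ≤ degr G v)
    (hρ : (n : ℝ) - 2 ≤ specRad G) : ∑ v, codeg G v + 3 ≤ 2 * n := by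
  have h1 := specRad_sq_le (by omega) hδ
  have h2 : ∑ v, (degr G v + codeg G v + 1) = n * n := by
    simp [degr_add_codeg]
  rw [sum_add_distrib, sum_add_distrib] at h2
  have h3 : (∑ v, (degr G v : ℝ)) + ∑ v, (codeg G v : ℝ) + n = n * n := by
    have := congrArg (Nat.cast : ℕ → ℝ) h2
    push_cast at this
    simpa using this
  have hn' : (2 : ℝ) ≤ n := by exact_mod_cast hn
  have h4 : ((n : ℝ) - 2) ^ 2 ≤ specRad G ^ 2 := pow_le_pow_left₀ (by linarith) hρ 2
  have h5 : ∑ v, (codeg G v : ℝ) + 3 ≤ 2 * n := by nlinarith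
  exact_mod_cast h5

lemma exists_nonneg_nbrSum_eq_specRad_mul (hn : 0 < n) (G : SimpleGraph (Fin n)) :
    ∃ x : Fin n → ℝ, x ≠ 0 ∧ (∀ i, 0 ≤ x i) ∧ ∀ i, nbrSum G x i = specRad G * x i := by
  obtain ⟨x, hx, he⟩ := exists_nbrSum_eq_specRad_mul hn G
  refine ⟨fun i => |x i|, fun h0 => hx (funext fun i => ?_), fun i => abs_nonneg _,
    nbrSum_eq_of_le_sum_mul_nbrSum G _ ?_⟩
  · simpa using congrFun h0 i
  · simp only [sq_abs, mul_sum]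
    refine sum_le_sum fun i _ => ?_
    calc specRad G * x i ^ 2 = x i * nbrSum G x i := by rw [he]; ring
      _ ≤ |x i| * |nbrSum G x i| := by rw [← abs_mul]; exact le_abs_self _
      _ ≤ |x i| * nbrSum G (fun i => |x i|) i := by
        refine mul_le_mul_of_nonneg_left ((abs_sum_le_sum_abs _ _).trans_eq ?_) (abs_nonneg _)
        exact sum_congr rfl fun j _ => by split_ifs <;> simp

lemma nbrSum_mono {G H : SimpleGraph (Fin n)} (hGH : G ≤ H) {x : Fin n → ℝ} (hx : ∀ i, 0 ≤ x i)
    (i : Fin n) : nbrSum G x i ≤ nbrSum H x i := by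
  refine sum_le_sum fun j _ => ?_
  by_cases h : G.Adj i j
  · simp [h, hGH h]
  · rw [if_neg h]
    split_ifs
    exacts [hx j, le_rfl]

lemma specRad_mono (hn : 0 < n) {G H : SimpleGraph (Fin n)} (hGH : G ≤ H) :
    specRad G ≤ specRad H := by
  obtain ⟨x, hx, hx0, he⟩ := exists_nonneg_nbrSum_eq_specRad_mul hn G
  refine le_of_mul_le_mul_right (le_trans ?_ (sum_mul_nbrSum_le H x)) (sum_sq_pos hx)
  rw [mul_sum]
  refine sum_le_sum fun i _ => ?_
  calc specRad G * x i ^ 2 = x i * nbrSum G x i := by rw [he]; ring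
    _ ≤ _ := mul_le_mul_of_nonneg_left (nbrSum_mono hGH hx0 i) (hx0 i)

lemma eq_Hgraph_of_specRad_eq {a : ℕ} (hn : 3 ≤ n) {G : SimpleGraph (Fin n)}
    (hle : G ≤ Hgraph n a) (h : specRad G = specRad (Hgraph n a)) : G = Hgraph n a := by
  obtain ⟨x, hx, hx0, he⟩ := exists_nonneg_nbrSum_eq_specRad_mul (by omega) G
  have heH : ∀ i, nbrSum (Hgraph n a) x i = specRad (Hgraph n a) * x i := by
    refine nbrSum_eq_of_le_sum_mul_nbrSum _ _ ?_
    rw [mul_sum]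
    refine sum_le_sum fun i _ => ?_
    calc specRad (Hgraph n a) * x i ^ 2 = x i * nbrSum G x i := by rw [he, h]; ring
      _ ≤ _ := mul_le_mul_of_nonneg_left (nbrSum_mono hle hx0 i) (hx0 i)
  have hρ : 0 < specRad (Hgraph n a) := by
    have := le_specRad_Hgraph (by omega : 2 ≤ n) a
    have : (3 : ℝ) ≤ n := by exact_mod_cast hn
    linarith
  have hnn : ∀ i, ∀ j ∈ (univ : Finset (Fin n)), 0 ≤ if (Hgraph n a).Adj i j then x j else 0 :=
    fun i j _ => by split_ifs; exacts [hx0 j, le_rfl]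
  have hpos : ∀ i : Fin n, 0 < i.val → x i ≠ 0 := by
    intro i hi hxi
    have hclique : ∀ j : Fin n, 0 < j.val → x j = 0 := by
      intro j hj
      by_cases hij : i = j
      · rwa [← hij]
      have h0 := heH i
      rw [hxi, mul_zero, nbrSum, sum_eq_zero_iff_of_nonneg (hnn i)] at h0
      simpa [Hgraph_adj, hij, hi, hj] using h0 j (mem_univ j)
    refine hx (funext fun j => ?_)
    by_cases hj : 0 < j.val
    · exact hclique j hj
    have h0 : nbrSum (Hgraph n a) x j = 0 := by
      refine sum_eq_zero fun k _ => ?_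
      split_ifs with hk
      · exact hclique k (by rw [Hgraph_adj] at hk; omega)
      · rfl
    rw [heH] at h0
    exact (mul_eq_zero.1 h0).resolve_left hρ.ne'
  have key : ∀ i j : Fin n, 0 < j.val → (Hgraph n a).Adj i j → G.Adj i j := by
    intro i j hj hH
    by_contra hG
    have hlt : nbrSum G x i < nbrSum (Hgraph n a) x i := by
      refine sum_lt_sum (fun k _ => ?_) ⟨j, mem_univ j, ?_⟩
      · by_cases hk : G.Adj i k
        · simp [hk, hle hk]
        · rw [if_neg hk]
          exact hnn i k (mem_univ k)
      · rw [if_neg hG, if_pos hH]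
        exact (hx0 j).lt_of_ne' (hpos j hj)
    rw [he, heH, h] at hlt
    exact lt_irrefl _ hlt
  refine le_antisymm hle fun i j hH => ?_
  by_cases hj : 0 < j.val
  · exact key i j hj hH
  · exact (key j i (by rw [Hgraph_adj] at hH; omega) hH.symm).symm

lemma exists_iso_le_Hgraph {a : ℕ} (han : a ≤ n) {G : SimpleGraph (Fin n)} {v : Fin n}
    (hv : degr G v < a) : ∃ G' : SimpleGraph (Fin n), Nonempty (G ≃g G') ∧ G' ≤ Hgraph n a := by
  have : NeZero n := ⟨by omega⟩
  obtain ⟨T, hST, -, hT⟩ := exists_subsuperset_card_eq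
    (subset_univ (insert v ({w | G.Adj v w} : Finset (Fin n)))) (n := a)
    (by rw [card_insert_of_notMem (by simp)]; exact hv) (by simpa using han)
  have hU : #({j | j.val < a} : Finset (Fin n)) = a := by
    rw [Fin.card_filter_val_lt, min_eq_right han]
  let π : Equiv.Perm (Fin n) := (equivOfCardEq (hT.trans hU.symm)).extendSubtype
  have hπ : ∀ x ∈ T, (π x).val < a := fun x hx => by
    simpa using Equiv.extendSubtype_mem (equivOfCardEq (hT.trans hU.symm)) x hx
  let σ : Equiv.Perm (Fin n) := π.trans (Equiv.swap (π v) 0)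
  have hσv : σ v = 0 := by simp [σ]
  have hσ : ∀ x ∈ T, (σ x).val < a := by
    intro x hx
    simp only [σ, Equiv.trans_apply, Equiv.swap_apply_def]
    split_ifs
    · simp; omega
    · exact hπ v (hST (mem_insert_self _ _))
    · exact hπ x hx
  have hσ0 : ∀ x, G.Adj v x → 0 < (σ x).val ∧ (σ x).val < a := by
    intro x hx
    refine ⟨Nat.pos_of_ne_zero fun h0 => hx.ne (σ.injective ?_), hσ x (hST (by simp [hx]))⟩
    rw [hσv]
    exact Fin.ext (by simp [h0])
  have hσ1 : ∀ x, (σ x).val = 0 → x = v := fun x h0 =>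
    σ.injective (by rw [hσv]; exact Fin.ext (by simp [h0]))
  refine ⟨G.map σ.toEmbedding, ⟨SimpleGraph.Iso.map σ G⟩, ?_⟩
  rintro _ _ ⟨-, x, y, hxy, rfl, rfl⟩
  rw [Hgraph_adj]
  refine ⟨σ.injective.ne hxy.ne, ?_⟩
  by_cases hx : (σ x).val = 0
  · obtain rfl := hσ1 x hx
    exact Or.inr (Or.inl ⟨hx, hσ0 y hxy⟩)
  by_cases hy : (σ y).val = 0
  · obtain rfl := hσ1 y hy
    exact Or.inr (Or.inr ⟨hy, hσ0 x hxy.symm⟩)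
  exact Or.inl ⟨Nat.pos_of_ne_zero hx, Nat.pos_of_ne_zero hy⟩

end Spectral

/-- For 1 ≤ a ≤ b, b ≥ 2, n ≥ 3a+4 (na even when a = b): any n-vertex graph that is
not [a,b]-covered satisfies ρ(G) ≤ ρ(H_{n,a}), with equality iff G ≅ H_{n,a}. -/
theorem spectral_extremal_non_abCovered {n a b : ℕ} (ha : 1 ≤ a) (hab : a ≤ b)
    (hb : 2 ≤ b) (hn : 3 * a + 4 ≤ n) (hpar : a = b → Even (n * a))
    (G : SimpleGraph (Fin n)) (h : ¬ IsABCovered G a b) :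
    specRad G ≤ specRad (Hgraph n a) ∧
      (specRad G = specRad (Hgraph n a) ↔ Nonempty (G ≃g Hgraph n a)) := by
  have hn0 : 0 < n := by omega
  by_cases hδ : ∀ v, a ≤ degr G v
  · have hlt : specRad G < specRad (Hgraph n a) := by
      refine lt_of_lt_of_le (lt_of_not_ge fun hρ => h ?_) (le_specRad_Hgraph (by omega) a)
      refine isABCovered_of_sum_codeg ha hab hb (by simpa using hn) (by simpa using hpar) hδ ?_
      rw [Fintype.card_fin]
      exact sum_codeg_add_three_le (by omega) (fun v => ha.trans (hδ v)) hρ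
    exact ⟨hlt.le, fun he => absurd he hlt.ne, fun ⟨e⟩ => specRad_eq_of_iso hn0 e⟩
  · push Not at hδ
    obtain ⟨v, hv⟩ := hδ
    obtain ⟨G', ⟨e⟩, hle⟩ := exists_iso_le_Hgraph (by omega) hv
    rw [specRad_eq_of_iso hn0 e]
    refine ⟨specRad_mono hn0 hle, fun he => ?_, fun ⟨e'⟩ => ?_⟩
    · exact ⟨eq_Hgraph_of_specRad_eq (by omega) hle he ▸ e⟩
    · exact specRad_eq_of_iso hn0 (e.symm.trans e')
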